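/- Let p>2 and let U⊆V be finite with the induced subgraph (U,E|_U) connected and ∂U nonempty. Let λ be the smallest Dirichlet eigenvalue of −Δ_p on U (i.e. the minimum of all λ'∈ℝ admitting a nonzero eigenfunction) and let φ be a corresponding eigenfunction. Then φ does not change sign in U: either φ(x)>0 for every x∈U or φ(x)<0 for every x∈U. -/

import Mathlib

open scoped ENNReal
open Classical Filter Set

/-- The weighted degree `μ(x) = ∑_{y ∼ x} ω(x,y)` of a vertex of a locally finite
weighted graph (non-neighbours contribute `ω(x,y) = 0`). -/
noncomputable def graphMu {V : Type*} (ω : V → V → ℝ) (x : V) : ℝ := ∑' y, ω x y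

/-- The graph `p`-Laplacian
`Δ_p f(x) = (1/μ(x)) ∑_{y ∼ x} ω(x,y) |f(y) - f(x)|^{p-2} (f(y) - f(x))`. -/
noncomputable def pLap {V : Type*} (ω : V → V → ℝ) (p : ℝ) (f : V → ℝ) (x : V) : ℝ :=
  (graphMu ω x)⁻¹ * ∑' y, ω x y * |f y - f x| ^ (p - 2) * (f y - f x)

/-- The (outer vertex) boundary of `U`: vertices outside `U` adjacent to some vertex of `U`. -/
def bdry {V : Type*} (ω : V → V → ℝ) (U : Set V) : Set V :=
  {x | x ∉ U ∧ ∃ y ∈ U, 0 < ω x y}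

/-- `Ū = U ∪ ∂U`. -/
def vclosure {V : Type*} (ω : V → V → ℝ) (U : Set V) : Set V := U ∪ bdry ω U

/-- `φ` is an eigenfunction of `-Δ_p` on `U` with Dirichlet boundary conditions and
eigenvalue `lam`: `φ = 0` on `∂U`, `φ` not identically zero on `Ū`, and
`-Δ_p|_U φ(x) = lam |φ(x)|^{p-2} φ(x)` for `x ∈ U`. (For `x ∈ U` all neighbours of `x`
lie in `Ū`, so `Δ_p` coincides with `Δ_p|_U` there.) -/
def IsDirichletEigenpair {V : Type*} (ω : V → V → ℝ) (p : ℝ) (U : Set V)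
    (lam : ℝ) (φ : V → ℝ) : Prop :=
  (∀ x ∈ bdry ω U, φ x = 0) ∧
  (∃ x ∈ vclosure ω U, φ x ≠ 0) ∧
  (∀ x ∈ U, -(pLap ω p φ x) = lam * |φ x| ^ (p - 2) * φ x)

/-!
The smallest Dirichlet eigenvalue is the minimum of the Rayleigh quotient, because a minimiser
exists by compactness and satisfies the eigenvalue equation. Testing the equation for an
eigenfunction `u` of this eigenvalue with its positive part `u⁺`, and using
`|b⁺ - a⁺|^p ≤ |b - a|^{p-2} (b - a) (b⁺ - a⁺)` on each edge, shows that `u⁺` is again a minimiser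
(or zero), hence again an eigenfunction. Where `u⁺` vanishes in `U`, the equation makes it vanish at
all neighbours, so by connectedness `u⁺` is positive on `U` or vanishes on `U`. Apply this to `u`
and to `-u`.
-/

/-- The odd power `t ↦ |t|^{p-2} t`, the derivative of `|t|^p / p`. -/
noncomputable def oddPow (p t : ℝ) : ℝ := |t| ^ (p - 2) * t

section OddPow

variable {p : ℝ}

lemma oddPow_neg (p t : ℝ) : oddPow p (-t) = -oddPow p t := by
  simp [oddPow]

lemma oddPow_nonneg (p : ℝ) {t : ℝ} (ht : 0 ≤ t) : 0 ≤ oddPow p t := by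
  unfold oddPow; positivity

lemma oddPow_pos (p : ℝ) {t : ℝ} (ht : 0 < t) : 0 < oddPow p t := by
  unfold oddPow; positivity

lemma abs_oddPow (hp : p ≠ 1) (t : ℝ) : |oddPow p t| = |t| ^ (p - 1) := by
  have hexp : p - 2 + 1 ≠ 0 := fun h => hp (by linarith)
  rw [oddPow, abs_mul, Real.abs_rpow_of_nonneg (abs_nonneg t), abs_abs,
    ← Real.rpow_add_one' (abs_nonneg t) hexp]
  ring_nf

lemma oddPow_mul_eq_abs_mul_abs (p : ℝ) {s t : ℝ} (h : 0 ≤ s * t) :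
    oddPow p s * t = |oddPow p s| * |t| := by
  rw [← abs_mul, abs_of_nonneg]
  rw [oddPow, mul_assoc]
  positivity

lemma abs_rpow_sub_one_mul_abs (hp : p ≠ 0) (t : ℝ) : |t| ^ (p - 1) * |t| = |t| ^ p := by
  rw [← Real.rpow_add_one' (abs_nonneg t) (by simpa using hp), sub_add_cancel]

lemma oddPow_mul_self (hp : p ≠ 0) (t : ℝ) : oddPow p t * t = |t| ^ p := by
  rcases eq_or_ne t 0 with rfl | ht
  · simp [Real.zero_rpow hp]
  · rw [oddPow, mul_assoc, ← abs_mul_abs_self t, ← mul_assoc,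
      ← Real.rpow_add_one (abs_ne_zero.2 ht), ← Real.rpow_add_one (abs_ne_zero.2 ht)]
    ring_nf

lemma hasDerivAt_abs_add_mul_rpow (hp : 1 < p) (c d : ℝ) :
    HasDerivAt (fun t : ℝ => |c + t * d| ^ p) (p * (oddPow p c * d)) 0 := by
  have hline : HasDerivAt (fun t : ℝ => c + t * d) d 0 := by
    simpa using ((hasDerivAt_id (0 : ℝ)).mul_const d).const_add c
  have hpow := (hasDerivAt_abs_rpow (c + 0 * d) hp).comp 0 hline
  simpa [Function.comp_def, oddPow, mul_assoc] using hpow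

lemma abs_posPart_sub_posPart_rpow_le (hp : 1 < p) (a b : ℝ) :
    |b⁺ - a⁺| ^ p ≤ oddPow p (b - a) * (b⁺ - a⁺) := by
  have hsign : 0 ≤ (b - a) * (b⁺ - a⁺) := by
    rcases le_total a b with h | h
    · exact mul_nonneg (sub_nonneg.2 h) (sub_nonneg.2 (posPart_mono h))
    · exact mul_nonneg_of_nonpos_of_nonpos (sub_nonpos.2 h) (sub_nonpos.2 (posPart_mono h))
  calc |b⁺ - a⁺| ^ p = |b⁺ - a⁺| ^ (p - 1) * |b⁺ - a⁺| :=
        (abs_rpow_sub_one_mul_abs (by positivity) _).symm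
    _ ≤ |b - a| ^ (p - 1) * |b⁺ - a⁺| :=
        mul_le_mul_of_nonneg_right (Real.rpow_le_rpow (abs_nonneg _)
          (abs_max_sub_max_le_abs b a 0) (sub_nonneg.2 hp.le)) (abs_nonneg _)
    _ = oddPow p (b - a) * (b⁺ - a⁺) := by
        rw [oddPow_mul_eq_abs_mul_abs p hsign, abs_oddPow hp.ne']

lemma oddPow_mul_posPart (hp : p ≠ 0) (t : ℝ) : oddPow p t * t⁺ = |t⁺| ^ p := by
  rcases le_total t 0 with h | h
  · simp [posPart_eq_zero.2 h, Real.zero_rpow hp]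
  · rw [posPart_eq_self.2 h, oddPow_mul_self hp]

end OddPow

section FiniteForms

variable {V : Type*} {ω : V → V → ℝ} {p : ℝ} {W S : Finset V} {m : V → ℝ} {l : ℝ}

/-- The `p`-Dirichlet energy of `f` over the edges with both endpoints in `W`; the factor `1/2`
compensates for counting each edge twice. -/
noncomputable def dirichletEnergy (ω : V → V → ℝ) (p : ℝ) (W : Finset V) (f : V → ℝ) : ℝ :=
  1 / 2 * ∑ x ∈ W, ∑ y ∈ W, ω x y * |f y - f x| ^ p

/-- The first variation of `dirichletEnergy / p` at `u` in the direction `h`. -/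
noncomputable def dirichletForm (ω : V → V → ℝ) (p : ℝ) (W : Finset V) (u h : V → ℝ) : ℝ :=
  1 / 2 * ∑ x ∈ W, ∑ y ∈ W, ω x y * (oddPow p (u y - u x) * (h y - h x))

/-- The `p`-th power of the `ℓ^p(S, m)` norm of `f`. -/
noncomputable def lpMass (m : V → ℝ) (p : ℝ) (S : Finset V) (f : V → ℝ) : ℝ :=
  ∑ x ∈ S, m x * |f x| ^ p

/-- The first variation of `lpMass / p` at `u` in the direction `h`. -/
noncomputable def lpForm (m : V → ℝ) (p : ℝ) (S : Finset V) (u h : V → ℝ) : ℝ :=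
  ∑ x ∈ S, m x * (oddPow p (u x) * h x)

/-- The `p`-Laplacian on the finite vertex set `W`, without the normalisation by the degree. -/
noncomputable def finsetPLap (ω : V → V → ℝ) (p : ℝ) (W : Finset V) (f : V → ℝ) (x : V) : ℝ :=
  ∑ y ∈ W, ω x y * oddPow p (f y - f x)

/-- `l` is a lower bound for the Rayleigh quotient `dirichletEnergy / lpMass` of functions
vanishing off `S`, stated without division. -/
def IsRayleighLowerBound (ω : V → V → ℝ) (p : ℝ) (W : Finset V) (m : V → ℝ) (S : Finset V)
    (l : ℝ) : Prop :=
  ∀ f : V → ℝ, (∀ x ∉ S, f x = 0) → l * lpMass m p S f ≤ dirichletEnergy ω p W f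

/-- The weak form of the Dirichlet eigenvalue equation on `S`, tested against functions vanishing
off `S`. The zero function is allowed. -/
structure IsWeakEigenfunction (ω : V → V → ℝ) (p : ℝ) (W : Finset V) (m : V → ℝ) (S : Finset V)
    (l : ℝ) (u : V → ℝ) : Prop where
  eq_zero_of_notMem : ∀ x ∉ S, u x = 0
  dirichletForm_eq : ∀ h : V → ℝ, (∀ x ∉ S, h x = 0) →
    dirichletForm ω p W u h = l * lpForm m p S u h

lemma dirichletForm_neg_left (u h : V → ℝ) :
    dirichletForm ω p W (-u) h = -dirichletForm ω p W u h := by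
  have hodd (x y : V) : oddPow p ((-u) y - (-u) x) = -oddPow p (u y - u x) := by
    rw [← oddPow_neg, Pi.neg_apply, Pi.neg_apply]
    ring_nf
  simp only [dirichletForm, hodd, neg_mul, mul_neg, Finset.sum_neg_distrib]

lemma lpForm_neg_left (u h : V → ℝ) : lpForm m p S (-u) h = -lpForm m p S u h := by
  simp [lpForm, oddPow_neg]

lemma dirichletEnergy_smul (c : ℝ) (f : V → ℝ) :
    dirichletEnergy ω p W (c • f) = |c| ^ p * dirichletEnergy ω p W f := by
  simp only [dirichletEnergy, Finset.mul_sum, Pi.smul_apply, smul_eq_mul, ← mul_sub, abs_mul,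
    Real.mul_rpow (abs_nonneg _) (abs_nonneg _)]
  exact Finset.sum_congr rfl fun x _ => Finset.sum_congr rfl fun y _ => by ring

lemma lpMass_smul (c : ℝ) (f : V → ℝ) : lpMass m p S (c • f) = |c| ^ p * lpMass m p S f := by
  simp only [lpMass, Finset.mul_sum, Pi.smul_apply, smul_eq_mul, abs_mul,
    Real.mul_rpow (abs_nonneg _) (abs_nonneg _), mul_left_comm]

lemma continuous_dirichletEnergy (hp : 0 ≤ p) : Continuous (dirichletEnergy ω p W) := by
  unfold dirichletEnergy
  fun_prop (disch := simp [hp])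

lemma continuous_lpMass (hp : 0 ≤ p) : Continuous (lpMass m p S) := by
  unfold lpMass
  fun_prop (disch := simp [hp])

lemma lpMass_nonneg (hm : ∀ x ∈ S, 0 ≤ m x) (f : V → ℝ) : 0 ≤ lpMass m p S f :=
  Finset.sum_nonneg fun x hx => mul_nonneg (hm x hx) (by positivity)

lemma lpMass_pos (hm : ∀ x ∈ S, 0 < m x) {f : V → ℝ} (hf : ∃ x ∈ S, f x ≠ 0) :
    0 < lpMass m p S f := by
  obtain ⟨x, hx, hfx⟩ := hf
  refine Finset.sum_pos' (fun y hy => mul_nonneg (hm y hy).le (by positivity)) ⟨x, hx, ?_⟩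
  exact mul_pos (hm x hx) (Real.rpow_pos_of_pos (abs_pos.2 hfx) _)

lemma hasDerivAt_dirichletEnergy_add_smul (hp : 1 < p) (u h : V → ℝ) :
    HasDerivAt (fun t : ℝ => dirichletEnergy ω p W (u + t • h))
      (p * dirichletForm ω p W u h) 0 := by
  have hedge (x y : V) : HasDerivAt (fun t : ℝ => ω x y * |(u + t • h) y - (u + t • h) x| ^ p)
      (ω x y * (p * (oddPow p (u y - u x) * (h y - h x)))) 0 := by
    have hline (t : ℝ) :
        (u + t • h) y - (u + t • h) x = u y - u x + t * (h y - h x) := by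
      simp only [Pi.add_apply, Pi.smul_apply, smul_eq_mul]
      ring
    simp only [hline]
    exact (hasDerivAt_abs_add_mul_rpow hp (u y - u x) (h y - h x)).const_mul (ω x y)
  refine ((HasDerivAt.fun_sum fun x (_ : x ∈ W) =>
    HasDerivAt.fun_sum fun y (_ : y ∈ W) => hedge x y).const_mul (1 / 2)).congr_deriv ?_
  simp only [dirichletForm, Finset.mul_sum]
  exact Finset.sum_congr rfl fun x _ => Finset.sum_congr rfl fun y _ => by ring

lemma hasDerivAt_lpMass_add_smul (hp : 1 < p) (u h : V → ℝ) :
    HasDerivAt (fun t : ℝ => lpMass m p S (u + t • h)) (p * lpForm m p S u h) 0 := by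
  refine (HasDerivAt.fun_sum fun x (_ : x ∈ S) =>
    (hasDerivAt_abs_add_mul_rpow hp (u x) (h x)).const_mul (m x)).congr_deriv ?_
  simp only [lpForm, Finset.mul_sum, mul_left_comm]

lemma dirichletForm_eq_neg_sum_mul_finsetPLap (hsymm : ∀ x y, ω x y = ω y x) (hSW : S ⊆ W)
    (u : V → ℝ) {h : V → ℝ} (hh : ∀ x ∉ S, h x = 0) :
    dirichletForm ω p W u h = -∑ x ∈ S, h x * finsetPLap ω p W u x := by
  have hleft : ∑ x ∈ W, ∑ y ∈ W, ω x y * (oddPow p (u y - u x) * h x)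
      = ∑ x ∈ S, h x * finsetPLap ω p W u x := by
    rw [Finset.sum_subset hSW fun x _ hx => by rw [hh x hx, zero_mul]]
    simp only [finsetPLap, Finset.mul_sum]
    exact Finset.sum_congr rfl fun x _ => Finset.sum_congr rfl fun y _ => by ring
  have hright : ∑ x ∈ W, ∑ y ∈ W, ω x y * (oddPow p (u y - u x) * h y)
      = -∑ x ∈ S, h x * finsetPLap ω p W u x := by
    rw [← hleft, Finset.sum_comm]
    simp only [← Finset.sum_neg_distrib]
    refine Finset.sum_congr rfl fun x _ => Finset.sum_congr rfl fun y _ => ?_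
    rw [hsymm y x, ← neg_sub (u y), oddPow_neg]
    ring
  simp only [dirichletForm, mul_sub, Finset.sum_sub_distrib, hleft, hright]
  ring

lemma isWeakEigenfunction_iff (hsymm : ∀ x y, ω x y = ω y x) (hSW : S ⊆ W) {u : V → ℝ}
    (hu : ∀ x ∉ S, u x = 0) :
    IsWeakEigenfunction ω p W m S l u ↔
      ∀ x ∈ S, -finsetPLap ω p W u x = m x * (l * oddPow p (u x)) := by
  constructor
  · intro hweak a ha
    have hsupp : ∀ x ∉ S, (Pi.single a 1 : V → ℝ) x = 0 := fun x hx =>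
      Pi.single_eq_of_ne (ne_of_mem_of_not_mem ha hx).symm 1
    have htest := hweak.dirichletForm_eq _ hsupp
    rw [dirichletForm_eq_neg_sum_mul_finsetPLap hsymm hSW u hsupp] at htest
    simp only [lpForm, Pi.single_apply, ite_mul, one_mul, zero_mul, mul_ite, mul_one, mul_zero,
      Finset.sum_ite_eq', ha, if_true] at htest
    linear_combination htest
  · refine fun hstrong => ⟨hu, fun h hh => ?_⟩
    rw [dirichletForm_eq_neg_sum_mul_finsetPLap hsymm hSW u hh, lpForm, Finset.mul_sum,
      ← Finset.sum_neg_distrib]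
    exact Finset.sum_congr rfl fun x hx => by linear_combination h x * hstrong x hx

lemma IsWeakEigenfunction.neg {u : V → ℝ} (hu : IsWeakEigenfunction ω p W m S l u) :
    IsWeakEigenfunction ω p W m S l (-u) where
  eq_zero_of_notMem x hx := by simp [hu.eq_zero_of_notMem x hx]
  dirichletForm_eq h hh := by
    rw [dirichletForm_neg_left, lpForm_neg_left, hu.dirichletForm_eq h hh, mul_neg]

lemma IsRayleighLowerBound.isWeakEigenfunction (hp : 1 < p)
    (hl : IsRayleighLowerBound ω p W m S l) {u : V → ℝ} (hu : ∀ x ∉ S, u x = 0)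
    (hmin : dirichletEnergy ω p W u ≤ l * lpMass m p S u) :
    IsWeakEigenfunction ω p W m S l u := by
  refine ⟨hu, fun h hh => ?_⟩
  have hderiv := (hasDerivAt_dirichletEnergy_add_smul (ω := ω) (W := W) hp u h).sub
    ((hasDerivAt_lpMass_add_smul (m := m) (S := S) hp u h).const_mul l)
  have hlocal : IsLocalMin ((fun t : ℝ => dirichletEnergy ω p W (u + t • h)) -
      fun t => l * lpMass m p S (u + t • h)) 0 := by
    refine .of_forall fun t => ?_
    have hbound := hl (u + t • h) fun x hx => by simp [hu x hx, hh x hx]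
    simp only [Pi.sub_apply, zero_smul, add_zero]
    linarith
  have hzero := hlocal.hasDerivAt_eq_zero hderiv
  refine mul_left_cancel₀ (by positivity : p ≠ 0) ?_
  linear_combination hzero

end FiniteForms

lemma exists_forall_div_mul_le_of_homogeneous {F : Type*} [NormedAddCommGroup F] [NormedSpace ℝ F]
    [ProperSpace F] [Nontrivial F] {p : ℝ} (hp : p ≠ 0) {E N : F → ℝ}
    (hE : Continuous E) (hN : Continuous N)
    (hEsmul : ∀ (c : ℝ) (f : F), E (c • f) = |c| ^ p * E f)
    (hNsmul : ∀ (c : ℝ) (f : F), N (c • f) = |c| ^ p * N f)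
    (hNpos : ∀ f ≠ 0, 0 < N f) :
    ∃ u ≠ 0, ∀ f, E u / N u * N f ≤ E f := by
  obtain ⟨u, hu, hmin⟩ := (isCompact_sphere (0 : F) 1).exists_isMinOn
    (NormedSpace.sphere_nonempty.2 zero_le_one)
    (hE.continuousOn.div hN.continuousOn fun f hf =>
      (hNpos f (ne_zero_of_mem_unit_sphere ⟨f, hf⟩)).ne')
  refine ⟨u, ne_zero_of_mem_unit_sphere ⟨u, hu⟩, fun f => ?_⟩
  rcases eq_or_ne f 0 with rfl | hf
  · have hE0 := hEsmul 0 0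
    have hN0 := hNsmul 0 0
    simp only [smul_zero, abs_zero, Real.zero_rpow hp, zero_mul] at hE0 hN0
    rw [hE0, hN0, mul_zero]
  · have hnorm : ‖f‖ ≠ 0 := norm_ne_zero_iff.2 hf
    have hscale : |‖f‖⁻¹| ^ p ≠ 0 := (by positivity : 0 < |‖f‖⁻¹| ^ p).ne'
    have hquot : E u / N u ≤ E (‖f‖⁻¹ • f) / N (‖f‖⁻¹ • f) :=
      isMinOn_iff.1 hmin _ (by simp [norm_smul, hnorm])
    rw [hEsmul, hNsmul, mul_div_mul_left _ _ hscale] at hquot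
    exact (le_div_iff₀ (hNpos f hf)).1 hquot

section Rayleigh

variable {V : Type*} {ω : V → V → ℝ} {p : ℝ} {W S : Finset V} {m : V → ℝ} {l : ℝ}

lemma exists_isRayleighLowerBound_attained (ω : V → V → ℝ) (W : Finset V) (hp : 0 < p)
    (hS : S.Nonempty) (hm : ∀ x ∈ S, 0 < m x) :
    ∃ (l : ℝ) (u : V → ℝ), IsRayleighLowerBound ω p W m S l ∧ (∀ x ∉ S, u x = 0) ∧
      (∃ x ∈ S, u x ≠ 0) ∧ dirichletEnergy ω p W u = l * lpMass m p S u := by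
  let extend : (S → ℝ) →ₗ[ℝ] V → ℝ := Function.ExtendByZero.linearMap ℝ Subtype.val
  have hextend_mem (g : S → ℝ) (x : S) : extend g x = g x :=
    Subtype.val_injective.extend_apply g (0 : V → ℝ) x
  have hextend_notMem (g : S → ℝ) (x : V) (hx : x ∉ S) : extend g x = 0 :=
    Function.extend_apply' g (0 : V → ℝ) x fun ⟨y, hy⟩ => hx (hy ▸ y.2)
  have hextend_ne (g : S → ℝ) (hg : g ≠ 0) : ∃ x ∈ S, extend g x ≠ 0 := by
    obtain ⟨x, hx⟩ := Function.ne_iff.1 hg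
    exact ⟨x, x.2, by rwa [hextend_mem]⟩
  have hcont : Continuous extend := extend.continuous_of_finiteDimensional
  have : Nonempty S := hS.to_subtype
  obtain ⟨g, hg, hmin⟩ := exists_forall_div_mul_le_of_homogeneous hp.ne'
    ((continuous_dirichletEnergy (ω := ω) (W := W) hp.le).comp hcont)
    ((continuous_lpMass (m := m) (S := S) hp.le).comp hcont)
    (fun c f => by simp only [Function.comp_apply, map_smul, dirichletEnergy_smul])
    (fun c f => by simp only [Function.comp_apply, map_smul, lpMass_smul])
    (fun f hf => lpMass_pos hm (hextend_ne f hf))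
  refine ⟨_, extend g, fun f hf => ?_, hextend_notMem g, hextend_ne g hg,
    (div_mul_cancel₀ _ (lpMass_pos hm (hextend_ne g hg)).ne').symm⟩
  have hrestrict : extend (fun x => f x) = f := by
    ext x
    by_cases hx : x ∈ S
    · exact hextend_mem _ ⟨x, hx⟩
    · rw [hextend_notMem _ x hx, hf x hx]
  simpa only [Function.comp_apply, hrestrict] using hmin fun x => f x

lemma dirichletEnergy_posPart_le (hp : 1 < p) (hnonneg : ∀ x y, 0 ≤ ω x y) (u : V → ℝ) :
    dirichletEnergy ω p W (fun x => (u x)⁺) ≤ dirichletForm ω p W u fun x => (u x)⁺ := by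
  unfold dirichletEnergy dirichletForm
  gcongr with x _ y _
  · exact hnonneg x y
  · exact abs_posPart_sub_posPart_rpow_le hp _ _

lemma IsWeakEigenfunction.posPart (hp : 1 < p) (hnonneg : ∀ x y, 0 ≤ ω x y)
    (hl : IsRayleighLowerBound ω p W m S l) {u : V → ℝ}
    (hu : IsWeakEigenfunction ω p W m S l u) :
    IsWeakEigenfunction ω p W m S l fun x => (u x)⁺ := by
  have hsupp : ∀ x ∉ S, (u x)⁺ = 0 := fun x hx => by simp [hu.eq_zero_of_notMem x hx]
  refine hl.isWeakEigenfunction hp hsupp ?_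
  calc dirichletEnergy ω p W (fun x => (u x)⁺)
      ≤ dirichletForm ω p W u fun x => (u x)⁺ := dirichletEnergy_posPart_le hp hnonneg u
    _ = l * lpForm m p S u fun x => (u x)⁺ := hu.dirichletForm_eq _ hsupp
    _ = l * lpMass m p S fun x => (u x)⁺ := by
        simp only [lpForm, lpMass, oddPow_mul_posPart (by positivity : p ≠ 0)]

lemma eq_zero_of_finsetPLap_nonpos {x y : V} (hnonneg : ∀ z, 0 ≤ ω x z) {f : V → ℝ}
    (hf : ∀ z, 0 ≤ f z) (hx : f x = 0) (hlap : finsetPLap ω p W f x ≤ 0)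
    (hy : y ∈ W) (hxy : 0 < ω x y) : f y = 0 := by
  by_contra hfy
  refine hlap.not_gt ?_
  simp only [finsetPLap, hx, sub_zero]
  exact Finset.sum_pos' (fun z _ => mul_nonneg (hnonneg z) (oddPow_nonneg p (hf z)))
    ⟨y, hy, mul_pos hxy (oddPow_pos p ((hf y).lt_of_ne' hfy))⟩

lemma forall_of_forall_adj {U : Set V}
    (hconn : ∀ x ∈ U, ∀ y ∈ U,
      Relation.ReflTransGen (fun a b => a ∈ U ∧ b ∈ U ∧ 0 < ω a b) x y)
    {P : V → Prop} (hadj : ∀ x ∈ U, ∀ y ∈ U, 0 < ω x y → P x → P y)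
    {x : V} (hx : x ∈ U) (hPx : P x) : ∀ y ∈ U, P y := fun y hy =>
  (hconn x hx y hy).head_induction_on (motive := fun a _ => P a → P y) id
    (fun hab _ ih ha => ih (hadj _ hab.1 _ hab.2.1 hab.2.2 ha)) hPx

lemma IsWeakEigenfunction.forall_pos_or_forall_eq_zero (hsymm : ∀ x y, ω x y = ω y x)
    (hnonneg : ∀ x y, 0 ≤ ω x y) (hSW : S ⊆ W)
    (hconn : ∀ x ∈ (S : Set V), ∀ y ∈ (S : Set V),
      Relation.ReflTransGen (fun a b => a ∈ (S : Set V) ∧ b ∈ (S : Set V) ∧ 0 < ω a b) x y)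
    {u : V → ℝ} (hu : IsWeakEigenfunction ω p W m S l u) (hu0 : ∀ x, 0 ≤ u x) :
    (∀ x ∈ S, 0 < u x) ∨ ∀ x ∈ S, u x = 0 := by
  have hstrong := (isWeakEigenfunction_iff hsymm hSW hu.eq_zero_of_notMem).1 hu
  have hadj : ∀ x ∈ S, ∀ y ∈ S, 0 < ω x y → u x = 0 → u y = 0 := by
    intro x hx y hy hxy hux
    have hlap : finsetPLap ω p W u x = 0 := by
      simpa [hux, oddPow] using hstrong x hx
    exact eq_zero_of_finsetPLap_nonpos (hnonneg x) hu0 hux hlap.le (hSW hy) hxy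
  by_cases hzero : ∃ x ∈ S, u x = 0
  · obtain ⟨x, hx, hux⟩ := hzero
    exact .inr (forall_of_forall_adj hconn hadj hx hux)
  · push Not at hzero
    exact .inl fun x hx => (hu0 x).lt_of_ne' (hzero x hx)

lemma IsWeakEigenfunction.forall_pos_or_forall_nonpos (hsymm : ∀ x y, ω x y = ω y x)
    (hnonneg : ∀ x y, 0 ≤ ω x y) (hp : 1 < p) (hSW : S ⊆ W)
    (hconn : ∀ x ∈ (S : Set V), ∀ y ∈ (S : Set V),
      Relation.ReflTransGen (fun a b => a ∈ (S : Set V) ∧ b ∈ (S : Set V) ∧ 0 < ω a b) x y)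
    (hl : IsRayleighLowerBound ω p W m S l) {u : V → ℝ}
    (hu : IsWeakEigenfunction ω p W m S l u) :
    (∀ x ∈ S, 0 < u x) ∨ ∀ x ∈ S, u x ≤ 0 :=
  ((hu.posPart hp hnonneg hl).forall_pos_or_forall_eq_zero hsymm hnonneg hSW hconn
    fun x => posPart_nonneg (u x)).imp
      (fun hpos x hx => posPart_pos_iff.1 (hpos x hx))
      (fun hzero x hx => posPart_eq_zero.1 (hzero x hx))

end Rayleigh

section DirichletProblem

variable {V : Type*} {ω : V → V → ℝ} {p : ℝ} {W S : Finset V} {lam : ℝ}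

lemma exists_finset_closedNeighborhood (hlf : ∀ x ∈ S, (Function.support (ω x)).Finite) :
    ∃ W : Finset V, S ⊆ W ∧ ∀ x ∈ S, Function.support (ω x) ⊆ W := by
  have hfin : (↑S ∪ ⋃ x ∈ S, Function.support (ω x)).Finite :=
    S.finite_toSet.union (S.finite_toSet.biUnion hlf)
  refine ⟨hfin.toFinset, ?_, fun x hx => ?_⟩
  · exact_mod_cast hfin.coe_toFinset ▸ subset_union_left
  · rw [hfin.coe_toFinset]
    exact (subset_biUnion_of_mem (u := fun x => Function.support (ω x)) hx).trans
      subset_union_right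

lemma finsetPLap_eq_graphMu_mul_pLap {x : V} (hW : Function.support (ω x) ⊆ W)
    (hx : graphMu ω x ≠ 0) (f : V → ℝ) :
    finsetPLap ω p W f x = graphMu ω x * pLap ω p f x := by
  rw [pLap, mul_inv_cancel_left₀ hx, tsum_eq_sum (s := W), finsetPLap]
  · simp only [oddPow, mul_assoc]
  · intro y hy
    simp [Function.notMem_support.1 fun h => hy (hW h)]

lemma isWeakEigenfunction_iff_pLap (hsymm : ∀ x y, ω x y = ω y x) (hSW : S ⊆ W)
    (hW : ∀ x ∈ S, Function.support (ω x) ⊆ W) (hμ : ∀ x ∈ S, 0 < graphMu ω x) {u : V → ℝ}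
    (hu : ∀ x ∉ S, u x = 0) :
    IsWeakEigenfunction ω p W (graphMu ω) S lam u ↔
      ∀ x ∈ S, -pLap ω p u x = lam * |u x| ^ (p - 2) * u x := by
  rw [isWeakEigenfunction_iff hsymm hSW hu]
  refine forall₂_congr fun x hx => ?_
  rw [finsetPLap_eq_graphMu_mul_pLap (hW x hx) (hμ x hx).ne', ← mul_neg,
    mul_right_inj' (hμ x hx).ne', oddPow, mul_assoc]

lemma isRayleighLowerBound_of_mem_lowerBounds (hsymm : ∀ x y, ω x y = ω y x) (hp : 1 < p)
    (hSW : S ⊆ W) (hW : ∀ x ∈ S, Function.support (ω x) ⊆ W)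
    (hμ : ∀ x ∈ S, 0 < graphMu ω x) (hS : S.Nonempty)
    (hlam : lam ∈ lowerBounds {l : ℝ | ∃ ψ : V → ℝ, IsDirichletEigenpair ω p S l ψ}) :
    IsRayleighLowerBound ω p W (graphMu ω) S lam := by
  obtain ⟨l, u, hl, hu, ⟨x, hx, hux⟩, hmin⟩ :=
    exists_isRayleighLowerBound_attained ω W (by positivity : 0 < p) hS hμ
  have hweak := hl.isWeakEigenfunction hp hu hmin.le
  have heigen : IsDirichletEigenpair ω p S l u :=
    ⟨fun y hy => hu y hy.1, ⟨x, .inl hx, hux⟩,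
      (isWeakEigenfunction_iff_pLap hsymm hSW hW hμ hu).1 hweak⟩
  intro f hf
  calc lam * lpMass (graphMu ω) p S f ≤ l * lpMass (graphMu ω) p S f :=
        mul_le_mul_of_nonneg_right (hlam ⟨u, heigen⟩) (lpMass_nonneg (fun x hx => (hμ x hx).le) f)
    _ ≤ dirichletEnergy ω p W f := hl f hf

lemma IsDirichletEigenpair.exists_mem_ne_zero {U : Set V} {φ : V → ℝ}
    (hφ : IsDirichletEigenpair ω p U lam φ) : ∃ x ∈ U, φ x ≠ 0 := by
  obtain ⟨hbdry, ⟨x, hx | hx, hφx⟩, -⟩ := hφ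
  · exact ⟨x, hx, hφx⟩
  · exact absurd (hbdry x hx) hφx

lemma pLap_congr {f g : V → ℝ} {x : V} (hx : f x = g x)
    (hadj : ∀ y, ω x y ≠ 0 → f y = g y) : pLap ω p f x = pLap ω p g x := by
  unfold pLap
  congr 1
  refine tsum_congr fun y => ?_
  rcases eq_or_ne (ω x y) 0 with h | h
  · simp [h]
  · rw [hx, hadj y h]

/-- The values of an eigenfunction outside `S ∪ ∂S` are arbitrary, so it is cut off to `S` before it
can serve as a test function. -/
lemma IsDirichletEigenpair.isWeakEigenfunction_indicator (hsymm : ∀ x y, ω x y = ω y x)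
    (hnonneg : ∀ x y, 0 ≤ ω x y) (hSW : S ⊆ W) (hW : ∀ x ∈ S, Function.support (ω x) ⊆ W)
    (hμ : ∀ x ∈ S, 0 < graphMu ω x) {φ : V → ℝ} (hφ : IsDirichletEigenpair ω p S lam φ) :
    IsWeakEigenfunction ω p W (graphMu ω) S lam ((S : Set V).indicator φ) := by
  refine (isWeakEigenfunction_iff_pLap hsymm hSW hW hμ fun x hx =>
    indicator_of_notMem (by exact_mod_cast hx) φ).2 fun x hx => ?_
  have hindicator : (S : Set V).indicator φ x = φ x := indicator_of_mem hx φ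
  rw [hindicator, ← hφ.2.2 x hx, pLap_congr hindicator]
  intro y hxy
  by_cases hy : y ∈ (S : Set V)
  · exact indicator_of_mem hy φ
  · rw [indicator_of_notMem hy, hφ.1 y ⟨hy, x, hx, hsymm x y ▸ (hnonneg x y).lt_of_ne' hxy⟩]

end DirichletProblem

lemma graphMu_pos {V : Type*} {ω : V → V → ℝ} {x y : V} (hnonneg : ∀ z, 0 ≤ ω x z)
    (hlf : (Function.support (ω x)).Finite)
    (hconn : Relation.ReflTransGen (fun a b => 0 < ω a b) x y) (hne : x ≠ y) :
    0 < graphMu ω x := by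
  obtain h | ⟨z, hxz, -⟩ := hconn.cases_head
  · exact absurd h hne
  · exact (summable_of_hasFiniteSupport hlf).tsum_pos hnonneg z hxz

theorem first_eigenfunction_fixed_sign_general
    {V : Type*} (ω : V → V → ℝ)
    (hsymm : ∀ x y, ω x y = ω y x)
    (hnonneg : ∀ x y, 0 ≤ ω x y)
    (p : ℝ) (hp : 1 < p)
    (U : Set V) (hUfin : U.Finite)
    (hlf : ∀ x ∈ U, (Function.support (ω x)).Finite)
    (hμ : ∀ x ∈ U, 0 < graphMu ω x)
    (hUconn : ∀ x ∈ U, ∀ y ∈ U,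
      Relation.ReflTransGen (fun a b => a ∈ U ∧ b ∈ U ∧ 0 < ω a b) x y)
    (lam : ℝ) (hlam : IsLeast {l : ℝ | ∃ ψ : V → ℝ, IsDirichletEigenpair ω p U l ψ} lam)
    (φ : V → ℝ) (hφ : IsDirichletEigenpair ω p U lam φ) :
    (∀ x ∈ U, 0 < φ x) ∨ (∀ x ∈ U, φ x < 0) := by
  obtain ⟨S, rfl⟩ := hUfin.exists_finset_coe
  obtain ⟨W, hSW, hW⟩ := exists_finset_closedNeighborhood hlf
  obtain ⟨x₀, hx₀, hφx₀⟩ := hφ.exists_mem_ne_zero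
  have hbound := isRayleighLowerBound_of_mem_lowerBounds hsymm hp hSW hW hμ ⟨x₀, hx₀⟩ hlam.2
  have hweak := hφ.isWeakEigenfunction_indicator hsymm hnonneg hSW hW hμ
  have hindicator (x : V) (hx : x ∈ S) : (S : Set V).indicator φ x = φ x :=
    indicator_of_mem (by exact_mod_cast hx) φ
  rcases hweak.forall_pos_or_forall_nonpos hsymm hnonneg hp hSW hUconn hbound with hpos | hnonpos
  · exact .inl fun x hx => hindicator x hx ▸ hpos x hx
  rcases hweak.neg.forall_pos_or_forall_nonpos hsymm hnonneg hp hSW hUconn hbound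
    with hneg_pos | hneg_nonpos
  · exact .inr fun x hx => neg_pos.1 (hindicator x hx ▸ hneg_pos x hx)
  · have hle : φ x₀ ≤ 0 := hindicator x₀ hx₀ ▸ hnonpos x₀ hx₀
    have hge : 0 ≤ φ x₀ := neg_nonpos.1 (hindicator x₀ hx₀ ▸ hneg_nonpos x₀ hx₀)
    exact absurd (le_antisymm hle hge) hφx₀

/-- for finite `U` with connected induced subgraph and nonempty boundary, any
eigenfunction corresponding to the smallest Dirichlet eigenvalue of `-Δ_p` on `U` does not
change sign in `U`: it is either everywhere positive or everywhere negative on `U`. -/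
theorem first_eigenfunction_fixed_sign
    {V : Type*} (ω : V → V → ℝ)
    (hsymm : ∀ x y, ω x y = ω y x)
    (hnonneg : ∀ x y, 0 ≤ ω x y)
    (hloop : ∀ x, ω x x = 0)
    (hlf : ∀ x, (Function.support (ω x)).Finite)
    (hconn : ∀ x y, Relation.ReflTransGen (fun a b => 0 < ω a b) x y)
    (p : ℝ) (hp : 2 < p)
    (U : Set V) (hUfin : U.Finite)
    (hUconn : ∀ x ∈ U, ∀ y ∈ U,
      Relation.ReflTransGen (fun a b => a ∈ U ∧ b ∈ U ∧ 0 < ω a b) x y)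
    (hbne : (bdry ω U).Nonempty)
    (lam : ℝ) (hlam : IsLeast {l : ℝ | ∃ ψ : V → ℝ, IsDirichletEigenpair ω p U l ψ} lam)
    (φ : V → ℝ) (hφ : IsDirichletEigenpair ω p U lam φ) :
    (∀ x ∈ U, 0 < φ x) ∨ (∀ x ∈ U, φ x < 0) := by
  obtain ⟨b, hbU, -⟩ := hbne
  exact first_eigenfunction_fixed_sign_general ω hsymm hnonneg p (one_lt_two.trans hp) U hUfin
    (fun x _ => hlf x)
    (fun x hx => graphMu_pos (hnonneg x) (hlf x) (hconn x b) (ne_of_mem_of_not_mem hx hbU))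
    hUconn lam hlam φ hφ
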